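/- arXiv:2009.01946 — 2 statements merged into one kernel-verified Lean document; each statement's English description precedes it below -/
import Mathlib

section
/- Let A, B, C be a nondegenerate triangle in the Euclidean plane with side lengths a = dist B C, b = dist C A, c = dist A B. Let M₁ = midpoint(B,C), M₂ = midpoint(C,A), M₃ = midpoint(A,B), let G be the centroid, O the circumcenter, H the orthocenter, I the incenter (barycentric weights (a, b, c)), Mi the mittenpunkt (barycentric weights (a(b+c−a), b(c+a−b), c(a+b−c))), and Sy the symmedian point (barycentric weights (a², b², c²)). Then there exists a nonzero real polynomial in two variables of total degree at most 3 vanishing at all twelve points: A, B, C, M₁, M₂, M₃, Sy, G, O, Mi, I, H. -/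
open EuclideanGeometry RealInnerProductSpace

/-- The barycentric combination of three points with weights `u, v, w`. -/
noncomputable def bary (P Q R : EuclideanSpace ℝ (Fin 2)) (u v w : ℝ) :
    EuclideanSpace ℝ (Fin 2) :=
  (u / (u + v + w)) • P + (v / (u + v + w)) • Q + (w / (u + v + w)) • R

/-- Evaluation of a two-variable real polynomial at a point of the plane. -/
noncomputable def mvEval (f : MvPolynomial (Fin 2) ℝ)
    (p : EuclideanSpace ℝ (Fin 2)) : ℝ :=
  MvPolynomial.eval (fun i => p i) f

open MvPolynomial in
/-- linear form: signed area of `(P, Q, point)` -/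
noncomputable def lf (P Q : EuclideanSpace ℝ (Fin 2)) : MvPolynomial (Fin 2) ℝ :=
  C (P 1 - Q 1) * X 0 + C (Q 0 - P 0) * X 1 + C (P 0 * Q 1 - P 1 * Q 0)

noncomputable def lv (P Q R : EuclideanSpace ℝ (Fin 2)) : ℝ :=
  (P 1 - Q 1) * R 0 + (Q 0 - P 0) * R 1 + (P 0 * Q 1 - P 1 * Q 0)

theorem lf_deg (P Q : EuclideanSpace ℝ (Fin 2)) : (lf P Q).totalDegree ≤ 1 := by
  unfold lf
  refine (MvPolynomial.totalDegree_add _ _).trans (max_le ((MvPolynomial.totalDegree_add _ _).trans (max_le ?_ ?_)) ?_)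
  · refine (MvPolynomial.totalDegree_mul _ _).trans ?_
    rw [MvPolynomial.totalDegree_C, MvPolynomial.totalDegree_X]
  · refine (MvPolynomial.totalDegree_mul _ _).trans ?_
    rw [MvPolynomial.totalDegree_C, MvPolynomial.totalDegree_X]
  · rw [MvPolynomial.totalDegree_C]; exact zero_le_one

def cub (p q r x y z : ℝ) : ℝ :=
  x * (r * y ^ 2 - q * z ^ 2) + y * (p * z ^ 2 - r * x ^ 2) + z * (q * x ^ 2 - p * y ^ 2)

open MvPolynomial in
noncomputable def cubP (p q r : ℝ) (x y z : MvPolynomial (Fin 2) ℝ) : MvPolynomial (Fin 2) ℝ :=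
  x * (C r * (y * y) - C q * (z * z)) + y * (C p * (z * z) - C r * (x * x))
    + z * (C q * (x * x) - C p * (y * y))

theorem cubP_aux (p q : ℝ) (x y z : MvPolynomial (Fin 2) ℝ) (hx : x.totalDegree ≤ 1)
    (hy : y.totalDegree ≤ 1) (hz : z.totalDegree ≤ 1) :
    (x * (MvPolynomial.C p * (y * y) - MvPolynomial.C q * (z * z))).totalDegree ≤ 3 := by
  have h1 : ∀ (t : ℝ) (w : MvPolynomial (Fin 2) ℝ), w.totalDegree ≤ 1 →
      (MvPolynomial.C t * (w * w)).totalDegree ≤ 2 := by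
    intro t w hw
    have h1 := MvPolynomial.totalDegree_mul (MvPolynomial.C t) (w * w)
    have h2 := MvPolynomial.totalDegree_mul w w
    rw [MvPolynomial.totalDegree_C] at h1
    omega
  have h2 := MvPolynomial.totalDegree_sub (MvPolynomial.C p * (y * y)) (MvPolynomial.C q * (z * z))
  have h3 := max_le (h1 p y hy) (h1 q z hz)
  have h4 := MvPolynomial.totalDegree_mul x (MvPolynomial.C p * (y * y) - MvPolynomial.C q * (z * z))
  omega

theorem cubP_deg (p q r : ℝ) (x y z : MvPolynomial (Fin 2) ℝ) (hx : x.totalDegree ≤ 1)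
    (hy : y.totalDegree ≤ 1) (hz : z.totalDegree ≤ 1) : (cubP p q r x y z).totalDegree ≤ 3 := by
  unfold cubP
  refine (MvPolynomial.totalDegree_add _ _).trans (max_le ((MvPolynomial.totalDegree_add _ _).trans (max_le ?_ ?_)) ?_)
  · exact cubP_aux _ _ _ _ _ hx hy hz
  · exact cubP_aux _ _ _ _ _ hy hz hx
  · exact cubP_aux _ _ _ _ _ hz hx hy

theorem eval_cubP (p q r : ℝ) (A B C P : EuclideanSpace ℝ (Fin 2)) :
    mvEval (cubP p q r (lf B C) (lf C A) (lf A B)) P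
      = cub p q r (lv B C P) (lv C A P) (lv A B P) := by
  simp [mvEval, cubP, cub, lf, lv]
  ring

theorem eval_zero (p q r : ℝ) (A B C P : EuclideanSpace ℝ (Fin 2)) (u v w : ℝ)
    (hs : u + v + w ≠ 0)
    (h0 : (u + v + w) * P 0 = u * A 0 + v * B 0 + w * C 0)
    (h1 : (u + v + w) * P 1 = u * A 1 + v * B 1 + w * C 1)
    (h : cub p q r u v w = 0) :
    mvEval (cubP p q r (lf B C) (lf C A) (lf A B)) P = 0 := by
  rw [eval_cubP]
  have e1 : (u + v + w) * lv B C P = u * lv B C A := by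
    unfold lv; linear_combination (B 1 - C 1) * h0 + (C 0 - B 0) * h1
  have e2 : (u + v + w) * lv C A P = v * lv B C A := by
    unfold lv; linear_combination (C 1 - A 1) * h0 + (A 0 - C 0) * h1
  have e3 : (u + v + w) * lv A B P = w * lv B C A := by
    unfold lv; linear_combination (A 1 - B 1) * h0 + (B 0 - A 0) * h1
  have key : (u + v + w) ^ 3 * cub p q r (lv B C P) (lv C A P) (lv A B P) = 0 := by
    have : (u + v + w) ^ 3 * cub p q r (lv B C P) (lv C A P) (lv A B P)
      = cub p q r ((u + v + w) * lv B C P) ((u + v + w) * lv C A P) ((u + v + w) * lv A B P) := by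
      unfold cub; ring
    rw [this, e1, e2, e3]
    have : cub p q r (u * lv B C A) (v * lv B C A) (w * lv B C A)
      = (lv B C A) ^ 3 * cub p q r u v w := by unfold cub; ring
    rw [this, h, mul_zero]
  exact (mul_eq_zero.mp key).resolve_left (pow_ne_zero _ hs)

theorem det_ne (A B C : EuclideanSpace ℝ (Fin 2))
    (hABC : AffineIndependent ℝ ![A, B, C]) : lv B C A ≠ 0 := by
  intro h
  rw [affineIndependent_iff_not_collinear_set] at hABC
  apply hABC
  by_cases hAB : A = B
  · subst hAB
    simpa using collinear_pair ℝ A C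
  rw [collinear_iff_of_mem (p₀ := A) (by simp)]
  refine ⟨B - A, ?_⟩
  have hn : (B 0 - A 0) ^ 2 + (B 1 - A 1) ^ 2 ≠ 0 := by
    intro hz
    apply hAB
    have h0 : B 0 - A 0 = 0 := by nlinarith [sq_nonneg (B 0 - A 0), sq_nonneg (B 1 - A 1)]
    have h1 : B 1 - A 1 = 0 := by nlinarith [sq_nonneg (B 0 - A 0), sq_nonneg (B 1 - A 1)]
    ext i
    fin_cases i
    · simp; linarith
    · simp; linarith
  intro p hp
  simp only [Set.mem_insert_iff, Set.mem_singleton_iff] at hp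
  rcases hp with rfl | rfl | rfl
  · exact ⟨0, by simp⟩
  · exact ⟨1, by simp⟩
  · refine ⟨((B 0 - A 0) * (p 0 - A 0) + (B 1 - A 1) * (p 1 - A 1)) /
      ((B 0 - A 0) ^ 2 + (B 1 - A 1) ^ 2), ?_⟩
    unfold lv at h
    ext i
    fin_cases i
    · simp
      field_simp
      linear_combination -(B 1 - A 1) * h
    · simp
      field_simp
      linear_combination (B 0 - A 0) * h

theorem dist_sq (P Q : EuclideanSpace ℝ (Fin 2)) :
    dist P Q ^ 2 = (P 0 - Q 0) ^ 2 + (P 1 - Q 1) ^ 2 := by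
  rw [EuclideanSpace.dist_eq, Real.sq_sqrt (by positivity)]
  simp [Fin.sum_univ_two, Real.dist_eq, sq_abs]

theorem bary_mul (A B C : EuclideanSpace ℝ (Fin 2)) (u v w : ℝ) (hs : u + v + w ≠ 0) (i : Fin 2) :
    (u + v + w) * bary A B C u v w i = u * A i + v * B i + w * C i := by
  simp [bary]
  field_simp

theorem stmt4 (A B C O : EuclideanSpace ℝ (Fin 2))
    (hABC : AffineIndependent ℝ ![A, B, C])
    (a b c : ℝ) (ha : a = dist B C) (hb : b = dist C A) (hc : c = dist A B)
    (M₁ M₂ M₃ G H I Mi Sy : EuclideanSpace ℝ (Fin 2))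
    (hM₁ : M₁ = midpoint ℝ B C) (hM₂ : M₂ = midpoint ℝ C A)
    (hM₃ : M₃ = midpoint ℝ A B)
    (hG : G = (1 / 3 : ℝ) • A + (1 / 3 : ℝ) • B + (1 / 3 : ℝ) • C)
    (hO : dist O A = dist O B ∧ dist O A = dist O C)
    (hH : H = A + B + C - (2 : ℝ) • O)
    (hI : I = bary A B C a b c)
    (hMi : Mi = bary A B C (a * (b + c - a)) (b * (c + a - b)) (c * (a + b - c)))
    (hSy : Sy = bary A B C (a ^ 2) (b ^ 2) (c ^ 2)) :
    ∃ f : MvPolynomial (Fin 2) ℝ, f ≠ 0 ∧ f.totalDegree ≤ 3 ∧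
      mvEval f A = 0 ∧ mvEval f B = 0 ∧ mvEval f C = 0 ∧
      mvEval f M₁ = 0 ∧ mvEval f M₂ = 0 ∧ mvEval f M₃ = 0 ∧
      mvEval f Sy = 0 ∧ mvEval f G = 0 ∧ mvEval f O = 0 ∧
      mvEval f Mi = 0 ∧ mvEval f I = 0 ∧ mvEval f H = 0 := by
  have hD := det_ne A B C hABC
  have a2 := dist_sq B C
  have b2 := dist_sq C A
  have c2 := dist_sq A B
  rw [← ha] at a2
  rw [← hb] at b2
  rw [← hc] at c2
  have ha0 : 0 < a := by
    rw [ha, dist_pos]; rintro rfl; apply hD; unfold lv; ring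
  have hb0 : 0 < b := by
    rw [hb, dist_pos]; rintro rfl; apply hD; unfold lv; ring
  have hc0 : 0 < c := by
    rw [hc, dist_pos]; rintro rfl; apply hD; unfold lv; ring
  have t1 : a ≤ b + c := by
    have := dist_triangle B A C
    rw [dist_comm B A, dist_comm A C] at this; linarith
  have t2 : b ≤ c + a := by
    have := dist_triangle C B A
    rw [dist_comm C B, dist_comm B A] at this; linarith
  have t3 : c ≤ a + b := by
    have := dist_triangle A C B
    rw [dist_comm A C, dist_comm C B] at this; linarith
  have sS : a ^ 2 + b ^ 2 + c ^ 2 ≠ 0 := by positivity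
  have sI : a + b + c ≠ 0 := by positivity
  have sM : a * (b + c - a) + b * (c + a - b) + c * (a + b - c) ≠ 0 := by
    intro h
    have n1 := mul_nonneg ha0.le (sub_nonneg.2 t1)
    have n2 := mul_nonneg hb0.le (sub_nonneg.2 t2)
    have n3 := mul_nonneg hc0.le (sub_nonneg.2 t3)
    have z1 : a * (b + c - a) = 0 := by linarith
    have z2 : b * (c + a - b) = 0 := by linarith
    have := (mul_eq_zero.1 z1).resolve_left ha0.ne'
    have := (mul_eq_zero.1 z2).resolve_left hb0.ne'
    linarith
  -- circumcenter weights
  obtain ⟨U, hU⟩ : ∃ U, U = a ^ 2 * (b ^ 2 + c ^ 2 - a ^ 2) := ⟨_, rfl⟩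
  obtain ⟨V, hV⟩ : ∃ V, V = b ^ 2 * (c ^ 2 + a ^ 2 - b ^ 2) := ⟨_, rfl⟩
  obtain ⟨W, hW⟩ : ∃ W, W = c ^ 2 * (a ^ 2 + b ^ 2 - c ^ 2) := ⟨_, rfl⟩
  have hT : U + V + W = 4 * (lv B C A) ^ 2 := by
    rw [hU, hV, hW, a2, b2, c2]; unfold lv; ring
  have sO : U + V + W ≠ 0 := by rw [hT]; positivity
  have oA := dist_sq O A
  have oB := dist_sq O B
  have oC := dist_sq O C
  rw [← hO.1] at oB
  rw [← hO.2] at oC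
  have k1 := oA.symm.trans oB
  have k2 := oA.symm.trans oC
  have O0 : (U + V + W) * O 0 = U * A 0 + V * B 0 + W * C 0 := by
    rw [hU, hV, hW, a2, b2, c2]
    linear_combination 2 * ((B 1 - C 1) * A 0 + (C 0 - B 0) * A 1 + (B 0 * C 1 - B 1 * C 0)) * ((C 1 - A 1) * k1 - (B 1 - A 1) * k2)
  have O1 : (U + V + W) * O 1 = U * A 1 + V * B 1 + W * C 1 := by
    rw [hU, hV, hW, a2, b2, c2]
    linear_combination 2 * ((B 1 - C 1) * A 0 + (C 0 - B 0) * A 1 + (B 0 * C 1 - B 1 * C 0)) * (-(C 0 - A 0) * k1 + (B 0 - A 0) * k2)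
  refine ⟨cubP (a ^ 2) (b ^ 2) (c ^ 2) (lf B C) (lf C A) (lf A B), ?_,
    cubP_deg _ _ _ _ _ _ (lf_deg _ _) (lf_deg _ _) (lf_deg _ _), ?_, ?_, ?_, ?_, ?_, ?_, ?_, ?_, ?_,
    ?_, ?_, ?_⟩
  · intro h
    have := eval_cubP (a ^ 2) (b ^ 2) (c ^ 2) A B C ((2 : ℝ) • B - C)
    rw [h] at this
    have e : cub (a ^ 2) (b ^ 2) (c ^ 2) (lv B C ((2 : ℝ) • B - C)) (lv C A ((2 : ℝ) • B - C))
      (lv A B ((2 : ℝ) • B - C)) = 6 * a ^ 2 * (lv B C A) ^ 3 := by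
      simp [cub, lv]; ring
    rw [e] at this
    simp [mvEval, hD, ha0.ne'] at this
  · exact eval_zero _ _ _ _ _ _ _ 1 0 0 (by norm_num) (by ring) (by ring) (by unfold cub; ring)
  · exact eval_zero _ _ _ _ _ _ _ 0 1 0 (by norm_num) (by ring) (by ring) (by unfold cub; ring)
  · exact eval_zero _ _ _ _ _ _ _ 0 0 1 (by norm_num) (by ring) (by ring) (by unfold cub; ring)
  · refine eval_zero _ _ _ _ _ _ _ 0 1 1 (by norm_num) ?_ ?_ (by unfold cub; ring) <;>
      · simp [hM₁, midpoint_eq_smul_add]; ring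
  · refine eval_zero _ _ _ _ _ _ _ 1 0 1 (by norm_num) ?_ ?_ (by unfold cub; ring) <;>
      · simp [hM₂, midpoint_eq_smul_add]; ring
  · refine eval_zero _ _ _ _ _ _ _ 1 1 0 (by norm_num) ?_ ?_ (by unfold cub; ring) <;>
      · simp [hM₃, midpoint_eq_smul_add]; ring
  · subst hSy
    exact eval_zero _ _ _ _ _ _ _ _ _ _ sS (bary_mul _ _ _ _ _ _ sS 0) (bary_mul _ _ _ _ _ _ sS 1)
      (by unfold cub; ring)
  · refine eval_zero _ _ _ _ _ _ _ 1 1 1 (by norm_num) ?_ ?_ (by unfold cub; ring) <;>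
      · simp [hG]; ring
  · exact eval_zero _ _ _ _ _ _ _ _ _ _ sO O0 O1 (by rw [hU, hV, hW]; unfold cub; ring)
  · subst hMi
    exact eval_zero _ _ _ _ _ _ _ _ _ _ sM (bary_mul _ _ _ _ _ _ sM 0) (bary_mul _ _ _ _ _ _ sM 1)
      (by unfold cub; ring)
  · subst hI
    exact eval_zero _ _ _ _ _ _ _ _ _ _ sI (bary_mul _ _ _ _ _ _ sI 0) (bary_mul _ _ _ _ _ _ sI 1)
      (by unfold cub; ring)
  · refine eval_zero _ _ _ _ _ _ _ (V + W - U) (U + W - V) (U + V - W) ?_ ?_ ?_ ?_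
    · intro h; apply sO; linarith
    · simp [hH]; linear_combination -2 * O0
    · simp [hH]; linear_combination -2 * O1
    · rw [hU, hV, hW]; unfold cub; ring
end

section
/- Let A, B, C be a nondegenerate triangle in the Euclidean plane with side lengths a = dist B C, b = dist C A, c = dist A B, incenter I, circumcenter O, and mittenpunkt Mi (barycentric weights (a(b+c−a), b(c+a−b), c(a+b−c))). Let A₁, A₂, A₃ be the arc midpoints: A₁ is the point of the circumcircle of ABC distinct from A and collinear with A and I, and similarly A₂ for B and A₃ for C. Let S be the Schiffler point, the barycentric combination of A, B, C with weights (a(b+c−a)(c+a)(a+b), b(c+a−b)(a+b)(b+c), c(a+b−c)(b+c)(c+a)). Then there exists a nonzero real polynomial f in two variables of total degree at most 2 vanishing at each of the seven points A₁, A₂, A₃, O, I, midpoint(Mi, I), S; moreover f can be chosen so that the conic it defines is rectangular (the coefficients of X² and Y² sum to zero). -/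
open EuclideanGeometry RealInnerProductSpace

abbrev E2 := EuclideanSpace ℝ (Fin 2)

noncomputable def DD (A B C : E2) : ℝ :=
  (B 0 - A 0) * (C 1 - A 1) - (B 1 - A 1) * (C 0 - A 0)

lemma distsq (P Q : E2) : dist P Q ^ 2 = (P 0 - Q 0) ^ 2 + (P 1 - Q 1) ^ 2 := by
  rw [EuclideanSpace.dist_eq, Real.sq_sqrt (by positivity)]
  simp [Fin.sum_univ_two, Real.dist_eq, sq_abs]

lemma DD_ne (A B C : E2) (h : AffineIndependent ℝ ![A, B, C]) : DD A B C ≠ 0 := by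
  intro hD
  unfold DD at hD
  have hAB : A ≠ B := by
    intro hAB
    have := h.injective (a₁ := 0) (a₂ := 1) (by simpa using hAB)
    exact absurd this (by decide)
  rw [affineIndependent_iff] at h
  have key : ∀ i : Fin 2, B i - C i = 0 ∧ C i - A i = 0 := by
    intro i
    have h1 := h Finset.univ ![B i - C i, C i - A i, A i - B i]
      (by simp [Fin.sum_univ_three])
      (by
        ext j
        fin_cases i <;> fin_cases j <;> simp [Fin.sum_univ_three] <;> linarith)
    exact ⟨by simpa using h1 0 (by simp), by simpa using h1 1 (by simp)⟩
  apply hAB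
  ext i
  have := key i
  linarith [this.1, this.2]

lemma conic_exists (A B C : E2) (a b c : ℝ) (hD : DD A B C ≠ 0)
    (ha : a ^ 2 = (B 0 - C 0) ^ 2 + (B 1 - C 1) ^ 2)
    (hb : b ^ 2 = (C 0 - A 0) ^ 2 + (C 1 - A 1) ^ 2)
    (hc : c ^ 2 = (A 0 - B 0) ^ 2 + (A 1 - B 1) ^ 2)
    (q1 q2 q3 q4 q5 q6 : ℝ)
    (htr : 2 * (q1 * a ^ 2 + q2 * b ^ 2 + q3 * c ^ 2) - (q4 * (b ^ 2 + c ^ 2 - a ^ 2)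
      + q5 * (c ^ 2 + a ^ 2 - b ^ 2) + q6 * (a ^ 2 + b ^ 2 - c ^ 2)) = 0)
    (hne : ¬ (q4 = 0 ∧ q5 = 0 ∧ q6 = 0)) :
    ∃ f : MvPolynomial (Fin 2) ℝ, f ≠ 0 ∧ f.totalDegree ≤ 2 ∧
      (MvPolynomial.coeff (Finsupp.single (0 : Fin 2) 2) f +
        MvPolynomial.coeff (Finsupp.single (1 : Fin 2) 2) f = 0) ∧
      ∀ u v w : ℝ, u + v + w ≠ 0 →
        q1 * u ^ 2 + q2 * v ^ 2 + q3 * w ^ 2 + q4 * (v * w) + q5 * (w * u) + q6 * (u * v) = 0 →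
        mvEval f (bary A B C u v w) = 0 := by
  obtain ⟨u0, hu0⟩ : ∃ x, x = B 0 * C 1 - B 1 * C 0 := ⟨_, rfl⟩
  obtain ⟨v0, hv0⟩ : ∃ x, x = C 0 * A 1 - C 1 * A 0 := ⟨_, rfl⟩
  obtain ⟨w0, hw0⟩ : ∃ x, x = A 0 * B 1 - A 1 * B 0 := ⟨_, rfl⟩
  obtain ⟨u1, hu1⟩ : ∃ x, x = B 1 - C 1 := ⟨_, rfl⟩
  obtain ⟨v1, hv1⟩ : ∃ x, x = C 1 - A 1 := ⟨_, rfl⟩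
  obtain ⟨w1, hw1⟩ : ∃ x, x = A 1 - B 1 := ⟨_, rfl⟩
  obtain ⟨u2, hu2⟩ : ∃ x, x = C 0 - B 0 := ⟨_, rfl⟩
  obtain ⟨v2, hv2⟩ : ∃ x, x = A 0 - C 0 := ⟨_, rfl⟩
  obtain ⟨w2, hw2⟩ : ∃ x, x = B 0 - A 0 := ⟨_, rfl⟩
  obtain ⟨k1, hk1⟩ : ∃ k, k = q1 * u1 ^ 2 + q2 * v1 ^ 2 + q3 * w1 ^ 2 + q4 * (v1 * w1)
    + q5 * (w1 * u1) + q6 * (u1 * v1) := ⟨_, rfl⟩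
  obtain ⟨k2, hk2⟩ : ∃ k, k = q1 * u2 ^ 2 + q2 * v2 ^ 2 + q3 * w2 ^ 2 + q4 * (v2 * w2)
    + q5 * (w2 * u2) + q6 * (u2 * v2) := ⟨_, rfl⟩
  obtain ⟨k3, hk3⟩ : ∃ k, k = q1 * (2 * u1 * u2) + q2 * (2 * v1 * v2) + q3 * (2 * w1 * w2)
    + q4 * (v1 * w2 + v2 * w1) + q5 * (w1 * u2 + w2 * u1) + q6 * (u1 * v2 + u2 * v1) := ⟨_, rfl⟩
  obtain ⟨k4, hk4⟩ : ∃ k, k = q1 * (2 * u1 * u0) + q2 * (2 * v1 * v0) + q3 * (2 * w1 * w0)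
    + q4 * (v1 * w0 + v0 * w1) + q5 * (w1 * u0 + w0 * u1) + q6 * (u1 * v0 + u0 * v1) := ⟨_, rfl⟩
  obtain ⟨k5, hk5⟩ : ∃ k, k = q1 * (2 * u0 * u2) + q2 * (2 * v0 * v2) + q3 * (2 * w0 * w2)
    + q4 * (v0 * w2 + v2 * w0) + q5 * (w0 * u2 + w2 * u0) + q6 * (u0 * v2 + u2 * v0) := ⟨_, rfl⟩
  obtain ⟨k6, hk6⟩ : ∃ k, k = q1 * u0 ^ 2 + q2 * v0 ^ 2 + q3 * w0 ^ 2 + q4 * (v0 * w0)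
    + q5 * (w0 * u0) + q6 * (u0 * v0) := ⟨_, rfl⟩
  have main : ∀ u v w : ℝ, u + v + w = 1 → ∀ x y : ℝ, x = u * A 0 + v * B 0 + w * C 0 →
      y = u * A 1 + v * B 1 + w * C 1 →
      k1 * x ^ 2 + k2 * y ^ 2 + k3 * (x * y) + k4 * x + k5 * y + k6 = DD A B C ^ 2 *
      (q1 * u ^ 2 + q2 * v ^ 2 + q3 * w ^ 2 + q4 * (v * w) + q5 * (w * u) + q6 * (u * v)) := by
    intro u v w h x y hx hy
    have e1 : u0 + u1 * x + u2 * y = DD A B C * u := by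
      have : w = 1 - u - v := by linarith
      subst this
      rw [hu0, hu1, hu2, hx, hy]; unfold DD; ring
    have e2 : v0 + v1 * x + v2 * y = DD A B C * v := by
      have : w = 1 - u - v := by linarith
      subst this
      rw [hv0, hv1, hv2, hx, hy]; unfold DD; ring
    have e3 : w0 + w1 * x + w2 * y = DD A B C * w := by
      have : w = 1 - u - v := by linarith
      subst this
      rw [hw0, hw1, hw2, hx, hy]; unfold DD; ring
    have : DD A B C ^ 2 *
      (q1 * u ^ 2 + q2 * v ^ 2 + q3 * w ^ 2 + q4 * (v * w) + q5 * (w * u) + q6 * (u * v)) =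
      q1 * (DD A B C * u) ^ 2 + q2 * (DD A B C * v) ^ 2 + q3 * (DD A B C * w) ^ 2
      + q4 * ((DD A B C * v) * (DD A B C * w)) + q5 * ((DD A B C * w) * (DD A B C * u))
      + q6 * ((DD A B C * u) * (DD A B C * v)) := by ring
    rw [this, ← e1, ← e2, ← e3, hk1, hk2, hk3, hk4, hk5, hk6]
    ring
  let f : MvPolynomial (Fin 2) ℝ :=
    MvPolynomial.monomial (Finsupp.single 0 2) k1 + MvPolynomial.monomial (Finsupp.single 1 2) k2
    + MvPolynomial.monomial (Finsupp.single 0 1 + Finsupp.single 1 1) k3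
    + MvPolynomial.monomial (Finsupp.single 0 1) k4
    + MvPolynomial.monomial (Finsupp.single 1 1) k5
    + MvPolynomial.monomial 0 k6
  have hev : ∀ g : Fin 2 → ℝ, MvPolynomial.eval g f =
      k1 * (g 0) ^ 2 + k2 * (g 1) ^ 2 + k3 * (g 0 * g 1) + k4 * g 0 + k5 * g 1 + k6 := by
    intro g
    simp [f, MvPolynomial.eval_monomial, Finsupp.prod_add_index', pow_add]
  refine ⟨f, ?_, ?_, ?_, ?_⟩
  · intro hf
    have z : ∀ u v w : ℝ, u + v + w = 1 →
       q1 * u ^ 2 + q2 * v ^ 2 + q3 * w ^ 2 + q4 * (v * w) + q5 * (w * u) + q6 * (u * v) = 0 := by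
      intro u v w h
      have h1 := main u v w h _ _ rfl rfl
      have h2 := hev ![u * A 0 + v * B 0 + w * C 0, u * A 1 + v * B 1 + w * C 1]
      rw [hf] at h2
      simp only [map_zero, Matrix.cons_val_zero, Matrix.cons_val_one] at h2
      rw [← h2] at h1
      rcases mul_eq_zero.1 h1.symm with h3 | h3
      · exact absurd h3 (pow_ne_zero 2 hD)
      · exact h3
    have z1 := z 1 0 0 (by norm_num)
    have z2 := z 0 1 0 (by norm_num)
    have z3 := z 0 0 1 (by norm_num)
    have z4 := z 0 (1/2) (1/2) (by norm_num)
    have z5 := z (1/2) 0 (1/2) (by norm_num)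
    have z6 := z (1/2) (1/2) 0 (by norm_num)
    exact hne ⟨by linarith, by linarith, by linarith⟩
  · have hm : ∀ (s : Fin 2 →₀ ℕ) (k : ℝ), (s.sum fun _ e => e) ≤ 2 →
        (MvPolynomial.monomial s k).totalDegree ≤ 2 :=
      fun s k h => (MvPolynomial.totalDegree_monomial_le s k).trans h
    have ha : ∀ p q : MvPolynomial (Fin 2) ℝ, p.totalDegree ≤ 2 → q.totalDegree ≤ 2 →
      (p + q).totalDegree ≤ 2 := fun p q hp hq =>
        (MvPolynomial.totalDegree_add p q).trans (max_le hp hq)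
    refine ha _ _ (ha _ _ (ha _ _ (ha _ _ (ha _ _ (hm _ _ ?_) (hm _ _ ?_)) (hm _ _ ?_))
      (hm _ _ ?_)) (hm _ _ ?_)) (hm _ _ ?_)
    · simp
    · simp
    · rw [Finsupp.sum_add_index'] <;> simp
    · simp
    · simp
    · simp
  · have c0 : MvPolynomial.coeff (Finsupp.single (0 : Fin 2) 2) f = k1 := by
      simp [f, MvPolynomial.coeff_monomial, Finsupp.ext_iff, Fin.forall_fin_two]
    have c1 : MvPolynomial.coeff (Finsupp.single (1 : Fin 2) 2) f = k2 := by
      simp [f, MvPolynomial.coeff_monomial, Finsupp.ext_iff, Fin.forall_fin_two]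
    rw [c0, c1, hk1, hk2, hu1, hu2, hv1, hv2, hw1, hw2]
    rw [ha, hb, hc] at htr
    linear_combination htr / 2
  · intro u v w hs h
    unfold mvEval
    rw [hev]
    have := main (u / (u + v + w)) (v / (u + v + w)) (w / (u + v + w)) (by field_simp)
      (bary A B C u v w 0) (bary A B C u v w 1) (by simp [bary]) (by simp [bary])
    rw [this]
    have h2 : q1 * (u / (u + v + w)) ^ 2 + q2 * (v / (u + v + w)) ^ 2 + q3 * (w / (u + v + w)) ^ 2
      + q4 * (v / (u + v + w) * (w / (u + v + w))) + q5 * (w / (u + v + w) * (u / (u + v + w)))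
      + q6 * (u / (u + v + w) * (v / (u + v + w))) =
      (q1 * u ^ 2 + q2 * v ^ 2 + q3 * w ^ 2 + q4 * (v * w) + q5 * (w * u) + q6 * (u * v))
        / (u + v + w) ^ 2 := by
      field_simp
    rw [h2, h]; simp

lemma arc_mid (A B C O I P : E2) (a b c : ℝ) (hap : 0 < a) (hbp : 0 < b) (hcp : 0 < c)
    (hx : 0 < b + c - a)
    (ha : a ^ 2 = (B 0 - C 0) ^ 2 + (B 1 - C 1) ^ 2)
    (hb : b ^ 2 = (C 0 - A 0) ^ 2 + (C 1 - A 1) ^ 2)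
    (hc : c ^ 2 = (A 0 - B 0) ^ 2 + (A 1 - B 1) ^ 2)
    (hD : DD A B C ≠ 0)
    (hI : I = bary A B C a b c)
    (hO1 : (O 0 - A 0) ^ 2 + (O 1 - A 1) ^ 2 = (O 0 - B 0) ^ 2 + (O 1 - B 1) ^ 2)
    (hO2 : (O 0 - A 0) ^ 2 + (O 1 - A 1) ^ 2 = (O 0 - C 0) ^ 2 + (O 1 - C 1) ^ 2)
    (hP : (O 0 - P 0) ^ 2 + (O 1 - P 1) ^ 2 = (O 0 - A 0) ^ 2 + (O 1 - A 1) ^ 2)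
    (hPA : P ≠ A) (hcol : Collinear ℝ ({A, I, P} : Set E2)) :
    P = bary A B C (-a ^ 2) (b * (b + c)) (c * (b + c)) := by
  rw [collinear_iff_of_mem (p₀ := A) (by simp)] at hcol
  obtain ⟨V, hV⟩ := hcol
  obtain ⟨r, hr⟩ := hV I (by simp)
  obtain ⟨t, ht⟩ := hV P (by simp)
  have s0 : a + b + c ≠ 0 := by positivity
  have cI : ∀ i, (a + b + c) * (r * V i) = b * (B i - A i) + c * (C i - A i) := by
    intro i
    have h1 : I i = r * V i + A i := by rw [hr]; simp
    have h2 : (a + b + c) * I i = a * A i + b * B i + c * C i := by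
      rw [hI]; simp [bary]; field_simp
    rw [h1] at h2; linarith
  have cP : ∀ i, P i = t * V i + A i := by intro i; rw [ht]; simp
  have hr0 : r ≠ 0 := by
    intro h0
    have e0 := cI 0
    have e1 := cI 1
    rw [h0] at e0 e1
    apply hD
    have : b * DD A B C = 0 := by
      unfold DD; linear_combination (-(C 1 - A 1)) * e0 + (C 0 - A 0) * e1
    exact (mul_eq_zero.1 this).resolve_left hbp.ne'
  obtain ⟨τ, hτ⟩ : ∃ τ, τ = t / (r * (a + b + c)) := ⟨_, rfl⟩
  have cP' : ∀ i, P i = A i + τ * (b * (B i - A i) + c * (C i - A i)) := by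
    intro i
    rw [← cI i, cP i, hτ]; field_simp; ring
  have hτ0 : τ ≠ 0 := by
    intro h0
    apply hPA
    ext i
    rw [cP' i, h0]; ring
  have e : (τ * (b * c)) * (τ * ((b + c) ^ 2 - a ^ 2) - (b + c)) = 0 := by
    rw [cP' 0, cP' 1] at hP
    have hV2 : b * c * ((b + c) ^ 2 - a ^ 2) = (b * (B 0 - A 0) + c * (C 0 - A 0)) ^ 2 +
       (b * (B 1 - A 1) + c * (C 1 - A 1)) ^ 2 := by
      linear_combination (-(b * c)) * ha + (c ^ 2 + b * c) * hb + (b ^ 2 + b * c) * hc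
    linear_combination hP + τ ^ 2 * hV2 + τ * b * hO1 + τ * c * hO2
      - τ * b * hc - τ * c * hb
  have e' : τ * ((b + c) ^ 2 - a ^ 2) - (b + c) = 0 :=
    (mul_eq_zero.1 e).resolve_left (by positivity)
  have hn : (b + c) ^ 2 - a ^ 2 ≠ 0 := by
    have : (b + c) ^ 2 - a ^ 2 = (b + c - a) * (a + b + c) := by ring
    rw [this]; positivity
  have hτe : τ = (b + c) / ((b + c) ^ 2 - a ^ 2) := by
    rw [eq_div_iff hn]; linarith
  have hs : -a ^ 2 + b * (b + c) + c * (b + c) = (b + c) ^ 2 - a ^ 2 := by ring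
  ext i
  rw [cP' i, hτe]
  simp only [bary, hs, PiLp.add_apply, PiLp.smul_apply, smul_eq_mul]
  field_simp
  ring

lemma circ (A B C O : E2) (a b c : ℝ)
    (ha : a ^ 2 = (B 0 - C 0) ^ 2 + (B 1 - C 1) ^ 2)
    (hb : b ^ 2 = (C 0 - A 0) ^ 2 + (C 1 - A 1) ^ 2)
    (hc : c ^ 2 = (A 0 - B 0) ^ 2 + (A 1 - B 1) ^ 2)
    (hD : DD A B C ≠ 0)
    (hO1 : (O 0 - A 0) ^ 2 + (O 1 - A 1) ^ 2 = (O 0 - B 0) ^ 2 + (O 1 - B 1) ^ 2)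
    (hO2 : (O 0 - A 0) ^ 2 + (O 1 - A 1) ^ 2 = (O 0 - C 0) ^ 2 + (O 1 - C 1) ^ 2)
    (hs : a ^ 2 * (b ^ 2 + c ^ 2 - a ^ 2) + b ^ 2 * (c ^ 2 + a ^ 2 - b ^ 2)
      + c ^ 2 * (a ^ 2 + b ^ 2 - c ^ 2) = 4 * DD A B C ^ 2) :
    O = bary A B C (a ^ 2 * (b ^ 2 + c ^ 2 - a ^ 2)) (b ^ 2 * (c ^ 2 + a ^ 2 - b ^ 2))
      (c ^ 2 * (a ^ 2 + b ^ 2 - c ^ 2)) := by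
  have h0 : 2 * DD A B C * (O 0 - A 0) = c ^ 2 * (C 1 - A 1) - b ^ 2 * (B 1 - A 1) := by
    unfold DD
    linear_combination (C 1 - A 1) * hO1 - (B 1 - A 1) * hO2 - (C 1 - A 1) * hc + (B 1 - A 1) * hb
  have h1 : 2 * DD A B C * (O 1 - A 1) = b ^ 2 * (B 0 - A 0) - c ^ 2 * (C 0 - A 0) := by
    unfold DD
    linear_combination (-(C 0 - A 0)) * hO1 + (B 0 - A 0) * hO2 + (C 0 - A 0) * hc
      - (B 0 - A 0) * hb
  have h4 : (4 * DD A B C ^ 2) ≠ 0 := by positivity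
  have k0 : (4 * DD A B C ^ 2) * (O 0 - A 0) = b ^ 2 * (c ^ 2 + a ^ 2 - b ^ 2) * (B 0 - A 0)
      + c ^ 2 * (a ^ 2 + b ^ 2 - c ^ 2) * (C 0 - A 0) := by
    have : (4 * DD A B C ^ 2) * (O 0 - A 0) = 2 * DD A B C * (2 * DD A B C * (O 0 - A 0)) := by ring
    rw [this, h0, ha, hb, hc]; unfold DD; ring
  have k1 : (4 * DD A B C ^ 2) * (O 1 - A 1) = b ^ 2 * (c ^ 2 + a ^ 2 - b ^ 2) * (B 1 - A 1)
      + c ^ 2 * (a ^ 2 + b ^ 2 - c ^ 2) * (C 1 - A 1) := by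
    have : (4 * DD A B C ^ 2) * (O 1 - A 1) = 2 * DD A B C * (2 * DD A B C * (O 1 - A 1)) := by ring
    rw [this, h1, ha, hb, hc]; unfold DD; ring
  have k : ∀ i, (4 * DD A B C ^ 2) * (O i - A i) = b ^ 2 * (c ^ 2 + a ^ 2 - b ^ 2) * (B i - A i)
      + c ^ 2 * (a ^ 2 + b ^ 2 - c ^ 2) * (C i - A i) := by
    intro i; fin_cases i
    · exact k0
    · exact k1
  ext i
  simp only [bary, hs, PiLp.add_apply, PiLp.smul_apply, smul_eq_mul]
  have hk := k i
  rw [div_mul_eq_mul_div, div_mul_eq_mul_div, div_mul_eq_mul_div, ← add_div, ← add_div,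
    eq_div_iff h4]
  linear_combination hk + (-A i) * hs

lemma bary_rot (A B C : E2) (u v w : ℝ) : bary B C A v w u = bary A B C u v w := by
  unfold bary
  rw [show v + w + u = u + v + w by ring]
  abel

lemma bary_mid (A B C : E2) (u v w x y z : ℝ) (h1 : u + v + w ≠ 0) (h2 : x + y + z ≠ 0) :
    midpoint ℝ (bary A B C u v w) (bary A B C x y z) =
    bary A B C (u * (x + y + z) + x * (u + v + w)) (v * (x + y + z) + y * (u + v + w))
      (w * (x + y + z) + z * (u + v + w)) := by
  have : (u * (x + y + z) + x * (u + v + w)) + (v * (x + y + z) + y * (u + v + w)) +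
      (w * (x + y + z) + z * (u + v + w)) = 2 * (u + v + w) * (x + y + z) := by ring
  unfold bary
  rw [this, midpoint_eq_smul_add]
  ext i
  simp only [PiLp.add_apply, PiLp.smul_apply, smul_eq_mul, invOf_eq_inv]
  generalize hm : u + v + w = m at *
  generalize hn : x + y + z = n at *
  field_simp
  ring

theorem stmt6 (A B C O : EuclideanSpace ℝ (Fin 2))
    (hABC : AffineIndependent ℝ ![A, B, C])
    (a b c : ℝ) (ha : a = dist B C) (hb : b = dist C A) (hc : c = dist A B)
    (I Mi S A₁ A₂ A₃ : EuclideanSpace ℝ (Fin 2))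
    (hI : I = bary A B C a b c)
    (hO : dist O A = dist O B ∧ dist O A = dist O C)
    (hMi : Mi = bary A B C (a * (b + c - a)) (b * (c + a - b)) (c * (a + b - c)))
    (hA₁ : dist O A₁ = dist O A ∧ A₁ ≠ A ∧ Collinear ℝ ({A, I, A₁} : Set (EuclideanSpace ℝ (Fin 2))))
    (hA₂ : dist O A₂ = dist O A ∧ A₂ ≠ B ∧ Collinear ℝ ({B, I, A₂} : Set (EuclideanSpace ℝ (Fin 2))))
    (hA₃ : dist O A₃ = dist O A ∧ A₃ ≠ C ∧ Collinear ℝ ({C, I, A₃} : Set (EuclideanSpace ℝ (Fin 2))))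
    (hS : S = bary A B C (a * (b + c - a) * (c + a) * (a + b))
      (b * (c + a - b) * (a + b) * (b + c)) (c * (a + b - c) * (b + c) * (c + a))) :
    ∃ f : MvPolynomial (Fin 2) ℝ, f ≠ 0 ∧ f.totalDegree ≤ 2 ∧
      mvEval f A₁ = 0 ∧ mvEval f A₂ = 0 ∧ mvEval f A₃ = 0 ∧
      mvEval f O = 0 ∧ mvEval f I = 0 ∧ mvEval f (midpoint ℝ Mi I) = 0 ∧
      mvEval f S = 0 ∧
      MvPolynomial.coeff (Finsupp.single (0 : Fin 2) 2) f +
        MvPolynomial.coeff (Finsupp.single (1 : Fin 2) 2) f = 0 := by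
  have hD := DD_ne A B C hABC
  have sa : a ^ 2 = (B 0 - C 0) ^ 2 + (B 1 - C 1) ^ 2 := by rw [ha, distsq]
  have sb : b ^ 2 = (C 0 - A 0) ^ 2 + (C 1 - A 1) ^ 2 := by rw [hb, distsq]
  have sc : c ^ 2 = (A 0 - B 0) ^ 2 + (A 1 - B 1) ^ 2 := by rw [hc, distsq]
  have hs : a ^ 2 * (b ^ 2 + c ^ 2 - a ^ 2) + b ^ 2 * (c ^ 2 + a ^ 2 - b ^ 2)
      + c ^ 2 * (a ^ 2 + b ^ 2 - c ^ 2) = 4 * DD A B C ^ 2 := by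
    rw [sa, sb, sc]; unfold DD; ring
  have hprod : (a + b + c) * (b + c - a) * (c + a - b) * (a + b - c) ≠ 0 := by
    have : (a + b + c) * (b + c - a) * (c + a - b) * (a + b - c) = 4 * DD A B C ^ 2 := by
      rw [← hs]; ring
    rw [this]; positivity
  have hx : 0 < b + c - a := by
    refine lt_of_le_of_ne ?_ ?_
    · have := dist_triangle B A C
      rw [dist_comm B A, dist_comm A C] at this; linarith
    · intro h; apply hprod; rw [← h]; ring
  have hy : 0 < c + a - b := by
    refine lt_of_le_of_ne ?_ ?_
    · have := dist_triangle C B A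
      rw [dist_comm C B, dist_comm B A] at this; linarith
    · intro h; apply hprod; rw [← h]; ring
  have hz : 0 < a + b - c := by
    refine lt_of_le_of_ne ?_ ?_
    · have := dist_triangle A C B
      rw [dist_comm A C, dist_comm C B] at this; linarith
    · intro h; apply hprod; rw [← h]; ring
  have ap : 0 < a := by linarith
  have bp : 0 < b := by linarith
  have cp : 0 < c := by linarith
  have o1 : (O 0 - A 0) ^ 2 + (O 1 - A 1) ^ 2 = (O 0 - B 0) ^ 2 + (O 1 - B 1) ^ 2 := by
    rw [← distsq, ← distsq, hO.1]
  have o2 : (O 0 - A 0) ^ 2 + (O 1 - A 1) ^ 2 = (O 0 - C 0) ^ 2 + (O 1 - C 1) ^ 2 := by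
    rw [← distsq, ← distsq, hO.2]
  have p1 : (O 0 - A₁ 0) ^ 2 + (O 1 - A₁ 1) ^ 2 = (O 0 - A 0) ^ 2 + (O 1 - A 1) ^ 2 := by
    rw [← distsq, ← distsq, hA₁.1]
  have p2 : (O 0 - A₂ 0) ^ 2 + (O 1 - A₂ 1) ^ 2 = (O 0 - A 0) ^ 2 + (O 1 - A 1) ^ 2 := by
    rw [← distsq, ← distsq, hA₂.1]
  have p3 : (O 0 - A₃ 0) ^ 2 + (O 1 - A₃ 1) ^ 2 = (O 0 - A 0) ^ 2 + (O 1 - A 1) ^ 2 := by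
    rw [← distsq, ← distsq, hA₃.1]
  have hD2 : DD B C A ≠ 0 := by
    have : DD B C A = DD A B C := by unfold DD; ring
    rwa [this]
  have hD3 : DD C A B ≠ 0 := by
    have : DD C A B = DD A B C := by unfold DD; ring
    rwa [this]
  have e1 := arc_mid A B C O I A₁ a b c ap bp cp hx sa sb sc hD hI o1 o2 p1 hA₁.2.1 hA₁.2.2
  have e2 := arc_mid B C A O I A₂ b c a bp cp ap hy sb sc sa hD2 (by rw [hI, bary_rot A B C])
    (o1.symm.trans o2) o1.symm (p2.trans o1) hA₂.2.1 hA₂.2.2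
  have e3 := arc_mid C A B O I A₃ c a b cp ap bp hz sc sa sb hD3 (by rw [hI, bary_rot, bary_rot])
    o2.symm (o2.symm.trans o1) (p3.trans o2) hA₃.2.1 hA₃.2.2
  rw [bary_rot] at e2
  rw [bary_rot, bary_rot] at e3
  have eO := circ A B C O a b c sa sb sc hD o1 o2 hs
  have sI : a + b + c ≠ 0 := by positivity
  have sM : a * (b + c - a) + b * (c + a - b) + c * (a + b - c) ≠ 0 := by positivity
  have eM := bary_mid A B C _ _ _ _ _ _ sM sI
  rw [← hMi, ← hI] at eM
  have s1 : -a ^ 2 + b * (b + c) + c * (b + c) ≠ 0 := by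
    have : -a ^ 2 + b * (b + c) + c * (b + c) = (b + c - a) * (a + b + c) := by ring
    rw [this]; positivity
  have s2 : a * (c + a) + -b ^ 2 + c * (c + a) ≠ 0 := by
    have : a * (c + a) + -b ^ 2 + c * (c + a) = (c + a - b) * (a + b + c) := by ring
    rw [this]; positivity
  have s3 : a * (a + b) + b * (a + b) + -c ^ 2 ≠ 0 := by
    have : a * (a + b) + b * (a + b) + -c ^ 2 = (a + b - c) * (a + b + c) := by ring
    rw [this]; positivity
  have sO : a ^ 2 * (b ^ 2 + c ^ 2 - a ^ 2) + b ^ 2 * (c ^ 2 + a ^ 2 - b ^ 2)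
      + c ^ 2 * (a ^ 2 + b ^ 2 - c ^ 2) ≠ 0 := by rw [hs]; positivity
  have sS : a * (b + c - a) * (c + a) * (a + b) + b * (c + a - b) * (a + b) * (b + c)
      + c * (a + b - c) * (b + c) * (c + a) ≠ 0 := by positivity
  have sMI : (a * (b + c - a)) * (a + b + c)
        + a * (a * (b + c - a) + b * (c + a - b) + c * (a + b - c))
      + ((b * (c + a - b)) * (a + b + c)
        + b * (a * (b + c - a) + b * (c + a - b) + c * (a + b - c)))
      + ((c * (a + b - c)) * (a + b + c)
        + c * (a * (b + c - a) + b * (c + a - b) + c * (a + b - c))) ≠ 0 := by positivity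
  by_cases heq : a = b ∧ b = c
  · obtain ⟨h1, h2⟩ := heq
    obtain ⟨f, f0, fd, ft, fe⟩ := conic_exists A B C a b c hD sa sb sc 0 (-2) 2 0 (-1) 1
      (by rw [h1, h2]; ring) (by norm_num)
    refine ⟨f, f0, fd, ?_, ?_, ?_, ?_, ?_, ?_, ?_, ft⟩
    · rw [e1]; refine fe _ _ _ s1 ?_
      rw [h1, h2]; ring
    · rw [e2]; refine fe _ _ _ s2 ?_
      rw [h1, h2]; ring
    · rw [e3]; refine fe _ _ _ s3 ?_
      rw [h1, h2]; ring
    · rw [eO]; refine fe _ _ _ sO ?_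
      rw [h1, h2]; ring
    · rw [hI]; refine fe _ _ _ sI ?_
      rw [h1, h2]; ring
    · rw [eM]; refine fe _ _ _ sMI ?_
      rw [h1, h2]; ring
    · rw [hS]; refine fe _ _ _ sS ?_
      rw [h1, h2]; ring
  · have abc0 : a * b * c ≠ 0 := by positivity
    obtain ⟨f, f0, fd, ft, fe⟩ := conic_exists A B C a b c hD sa sb sc
      (b * c * (c ^ 2 - b ^ 2)) (c * a * (a ^ 2 - c ^ 2)) (a * b * (b ^ 2 - a ^ 2))
      (a * b * c * (c - b)) (a * b * c * (a - c)) (a * b * c * (b - a))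
      (by ring) (by
        rintro ⟨h4, -, h6⟩
        have h4' := (mul_eq_zero.1 h4).resolve_left abc0
        have h6' := (mul_eq_zero.1 h6).resolve_left abc0
        exact heq ⟨by linarith, by linarith⟩)
    refine ⟨f, f0, fd, ?_, ?_, ?_, ?_, ?_, ?_, ?_, ft⟩
    · rw [e1]; refine fe _ _ _ s1 ?_
      ring
    · rw [e2]; refine fe _ _ _ s2 ?_
      ring
    · rw [e3]; refine fe _ _ _ s3 ?_
      ring
    · rw [eO]; refine fe _ _ _ sO ?_
      ring
    · rw [hI]; refine fe _ _ _ sI ?_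
      ring
    · rw [eM]; refine fe _ _ _ sMI ?_
      ring
    · rw [hS]; refine fe _ _ _ sS ?_
      ring
end
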